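/- For every m ≥ 2, the complexity of the period-doubling sequence satisfies (3/2)m ≤ p(m) ≤ (5/3)m. -/

import Mathlib

/-!
The sequence satisfies `pd (2 * j + 1) = 0` and `pd (2 * j) = 1 - pd j` (`j ≥ 1`). Hence an `m`-word starting
at an odd position `2 * j + 1` carries the same information as the word of length `⌊m / 2⌋` at
`j + 1`, and an `m`-word starting at an even position `2 * j` the same information as the word of
length `⌈m / 2⌉` at `j`. For `m ≥ 4` no word occurs both at an even and at an odd position: such a
word would force `pd j = pd (j + 1) = 1` for two consecutive indices, one of which is odd.
This gives `p(m) = p(⌊m / 2⌋) + p(⌈m / 2⌉)` for `m ≥ 4` (`complexity_rec`). Linear bounds are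
stable under this recursion, so they follow by strong induction from `p(2) = 3` and `p(3) = 5`,
where the lower and the upper bound, respectively, are attained.
-/

open Filter Topology

/-- The period-doubling sequence (1-based): `pd i = k_i mod 2` where `k_i` is the
largest `k` such that `2^k` divides `i`. -/
def pd (i : ℕ) : ℕ := padicValNat 2 i % 2

/-- The `m`-word `w_i^(m) = ω_i ω_{i+1} ⋯ ω_{i+m-1}` of the period-doubling sequence. -/
def wordAt (i m : ℕ) : List ℕ := (List.range m).map (fun h => pd (i + h))

/-- An `m`-word is allowed if it occurs in the period-doubling sequence. -/
def Allowed (m : ℕ) (v : List ℕ) : Prop := ∃ i, 1 ≤ i ∧ wordAt i m = v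

/-- The complexity function of the period-doubling sequence. -/
noncomputable def pdComplexity (m : ℕ) : ℕ := Set.ncard {v | Allowed m v}

/-- `HasFreq m v c`: the frequency of the `m`-word `v` in the period-doubling
sequence exists and equals `c`. -/
def HasFreq (m : ℕ) (v : List ℕ) (c : ℝ) : Prop :=
  Tendsto (fun n : ℕ => (((Finset.Icc 1 n).filter (fun i => wordAt i m = v)).card : ℝ) / n)
    atTop (𝓝 c)

open Classical in
/-- The correlation sum `C(ω, n, m)` of the period-doubling sequence, for a distance
threshold `ε` with `2^{-m} ≤ ε < 2^{-m+1}`. -/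
noncomputable def corrSum (n m : ℕ) : ℝ :=
  (((Finset.range n ×ˢ Finset.range n).filter
      (fun p : ℕ × ℕ => ∀ h ∈ Finset.Icc 1 m, pd (p.1 + h) = pd (p.2 + h))).card : ℝ) / (n : ℝ) ^ 2

/-- The period-doubling substitution `ζ(0) = 01`, `ζ(1) = 00`, extended to a morphism
on finite words. -/
def substWord (w : List ℕ) : List ℕ := (w.map (fun a => if a = 0 then [0, 1] else [0, 0])).flatten

/-- The period-doubling substitution acting on one-sided infinite sequences
(0-based indexing). -/
def substSeq (x : ℕ → ℕ) : ℕ → ℕ := fun n =>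
  if n % 2 = 0 then 0 else if x (n / 2) = 0 then 1 else 0

lemma pd_odd (j : ℕ) : pd (2 * j + 1) = 0 := by
  unfold pd
  rw [padicValNat.eq_zero_of_not_dvd (by omega)]

lemma pd_lt (i : ℕ) : pd i < 2 := Nat.mod_lt _ (by norm_num)

lemma pd_even (j : ℕ) (hj : 1 ≤ j) : pd (2 * j) = 1 - pd j := by
  unfold pd
  rw [padicValNat.mul (by norm_num) (by omega), padicValNat_self]
  omega

lemma pd_even_eq_iff (j k : ℕ) (hj : 1 ≤ j) (hk : 1 ≤ k) :
    pd (2 * j) = pd (2 * k) ↔ pd j = pd k := by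
  rw [pd_even j hj, pd_even k hk]
  have h1 := pd_lt j
  have h2 := pd_lt k
  omega

lemma wordAt_eq_iff (i k m : ℕ) :
    wordAt i m = wordAt k m ↔ ∀ h < m, pd (i + h) = pd (k + h) := by
  simp [wordAt]

lemma odd_word_iff (j k m : ℕ) :
    wordAt (2 * j + 1) m = wordAt (2 * k + 1) m ↔
      wordAt (j + 1) (m / 2) = wordAt (k + 1) (m / 2) := by
  rw [wordAt_eq_iff, wordAt_eq_iff]
  constructor
  · intro H h hh
    have := H (2 * h + 1) (by omega)
    rw [← pd_even_eq_iff _ _ (by omega) (by omega)]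
    convert this using 2 <;> ring
  · intro H h hh
    rcases Nat.even_or_odd' h with ⟨t, rfl | rfl⟩
    · rw [show 2 * j + 1 + 2 * t = 2 * (j + t) + 1 by ring,
        show 2 * k + 1 + 2 * t = 2 * (k + t) + 1 by ring, pd_odd, pd_odd]
    · rw [show 2 * j + 1 + (2 * t + 1) = 2 * (j + 1 + t) by ring,
        show 2 * k + 1 + (2 * t + 1) = 2 * (k + 1 + t) by ring,
        pd_even_eq_iff _ _ (by omega) (by omega)]
      exact H t (by omega)

lemma even_word_iff (j k m : ℕ) :
    wordAt (2 * (j + 1)) m = wordAt (2 * (k + 1)) m ↔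
      wordAt (j + 1) ((m + 1) / 2) = wordAt (k + 1) ((m + 1) / 2) := by
  rw [wordAt_eq_iff, wordAt_eq_iff]
  constructor
  · intro H h hh
    have := H (2 * h) (by omega)
    rw [← pd_even_eq_iff _ _ (by omega) (by omega)]
    convert this using 2 <;> ring
  · intro H h hh
    rcases Nat.even_or_odd' h with ⟨t, rfl | rfl⟩
    · rw [← mul_add, ← mul_add, pd_even_eq_iff _ _ (by omega) (by omega)]
      exact H t (by omega)
    · rw [← add_assoc, ← add_assoc, ← mul_add, ← mul_add, pd_odd, pd_odd]

/-- Two maps with the same kernel have ranges of the same cardinality. -/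
lemma ncard_range_eq {α β γ : Type*} [Nonempty α] (f : α → β) (g : α → γ)
    (h : ∀ i j, f i = f j ↔ g i = g j) : (Set.range f).ncard = (Set.range g).ncard := by
  refine Set.ncard_congr (fun b _ => g (Function.invFun f b)) ?_ ?_ ?_
  · intro b _
    exact ⟨_, rfl⟩
  · intro b c hb hc hbc
    rw [← Function.invFun_eq hb, ← Function.invFun_eq hc]
    exact (h _ _).2 hbc
  · rintro _ ⟨i, rfl⟩
    exact ⟨f i, ⟨i, rfl⟩, (h _ _).1 (Function.invFun_eq ⟨i, rfl⟩)⟩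

lemma allowed_eq_range (m : ℕ) :
    {v | Allowed m v} = Set.range (fun j => wordAt (j + 1) m) := by
  ext v
  constructor
  · rintro ⟨i, hi, rfl⟩
    exact ⟨i - 1, by simp only [Nat.sub_add_cancel hi]⟩
  · rintro ⟨j, rfl⟩
    exact ⟨j + 1, by omega, rfl⟩

lemma allowed_eq_union (m : ℕ) :
    {v | Allowed m v} = Set.range (fun j => wordAt (2 * j + 1) m) ∪
      Set.range (fun j => wordAt (2 * (j + 1)) m) := by
  rw [allowed_eq_range]
  ext v
  constructor
  · rintro ⟨i, rfl⟩
    rcases Nat.even_or_odd' i with ⟨t, rfl | rfl⟩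
    · exact Or.inl ⟨t, rfl⟩
    · exact Or.inr ⟨t, rfl⟩
  · rintro (⟨j, rfl⟩ | ⟨j, rfl⟩)
    · exact ⟨2 * j, rfl⟩
    · exact ⟨2 * j + 1, rfl⟩

lemma allowed_finite (m : ℕ) : {v | Allowed m v}.Finite := by
  refine ((List.finite_length_eq (Fin 2) m).image (List.map Fin.val)).subset ?_
  rintro _ ⟨i, _, rfl⟩
  refine ⟨(List.range m).map (fun h => ⟨pd (i + h), pd_lt _⟩), by simp, ?_⟩
  simp [wordAt]

lemma complexity_rec (m : ℕ) (hm : 4 ≤ m) :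
    pdComplexity m = pdComplexity (m / 2) + pdComplexity ((m + 1) / 2) := by
  have hfin := allowed_finite m
  unfold pdComplexity
  rw [allowed_eq_union] at hfin ⊢
  rw [Set.finite_union] at hfin
  rw [Set.ncard_union_eq ?_ hfin.1 hfin.2, allowed_eq_range, allowed_eq_range,
    ncard_range_eq _ _ (fun j k => odd_word_iff j k m),
    ncard_range_eq _ _ (fun j k => even_word_iff j k m)]
  rw [Set.disjoint_left]
  rintro _ ⟨k, rfl⟩ ⟨j, hjk⟩
  have H := (wordAt_eq_iff _ _ _).1 hjk
  have h0 := H 0 (by omega)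
  have h2 := H 2 (by omega)
  rw [add_zero, add_zero, pd_odd, pd_even _ (by omega)] at h0
  rw [show 2 * k + 1 + 2 = 2 * (k + 1) + 1 by ring, pd_odd,
    show 2 * (j + 1) + 2 = 2 * (j + 2) by ring, pd_even _ (by omega)] at h2
  -- now `pd (j + 1) = pd (j + 2) = 1`, although `j + 1` or `j + 2` is odd
  rcases Nat.even_or_odd' j with ⟨t, rfl | rfl⟩
  · rw [pd_odd] at h0
    omega
  · rw [show 2 * t + 1 + 2 = 2 * (t + 1) + 1 by ring, pd_odd] at h2
    omega

lemma pd_one : pd 1 = 0 := pd_odd 0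
lemma pd_two : pd 2 = 1 := by rw [pd_even 1 le_rfl, pd_one]
lemma pd_three : pd 3 = 0 := pd_odd 1
lemma pd_four : pd 4 = 0 := by rw [pd_even 2 (by omega), pd_two]
lemma pd_five : pd 5 = 0 := pd_odd 2
lemma pd_six : pd 6 = 1 := by rw [pd_even 3 (by omega), pd_three]
lemma pd_seven : pd 7 = 0 := pd_odd 3
lemma pd_eight : pd 8 = 1 := by rw [pd_even 4 (by omega), pd_four]

lemma wordAt_two (i : ℕ) : wordAt i 2 = [pd i, pd (i + 1)] := by
  simp [wordAt, List.range_succ]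

lemma wordAt_three (i : ℕ) : wordAt i 3 = [pd i, pd (i + 1), pd (i + 2)] := by
  simp [wordAt, List.range_succ]

lemma allowed_two_iff (v : List ℕ) : Allowed 2 v ↔ v ∈ ({[0, 0], [0, 1], [1, 0]} : Finset _) := by
  simp only [Finset.mem_insert, Finset.mem_singleton]
  constructor
  · rintro ⟨i, hi, rfl⟩
    rw [wordAt_two]
    have h1 := pd_lt i
    have h2 := pd_lt (i + 1)
    have h3 : pd i = 0 ∨ pd (i + 1) = 0 := by
      rcases Nat.even_or_odd' i with ⟨t, rfl | rfl⟩ <;> simp [pd_odd]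
    simp only [List.cons.injEq, and_true]
    omega
  · rintro (rfl | rfl | rfl)
    · exact ⟨3, by omega, by simp [wordAt_two, pd_three, pd_four]⟩
    · exact ⟨1, by omega, by simp [wordAt_two, pd_one, pd_two]⟩
    · exact ⟨2, by omega, by simp [wordAt_two, pd_two, pd_three]⟩

lemma allowed_three_iff (v : List ℕ) : Allowed 3 v ↔
    v ∈ ({[0, 0, 0], [0, 1, 0], [1, 0, 0], [0, 0, 1], [1, 0, 1]} : Finset _) := by
  simp only [Finset.mem_insert, Finset.mem_singleton]
  constructor
  · rintro ⟨i, hi, rfl⟩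
    rw [wordAt_three]
    have h1 := pd_lt i
    have h2 := pd_lt (i + 1)
    have h3 := pd_lt (i + 2)
    have h4 : (pd i = 0 ∧ pd (i + 2) = 0) ∨ pd (i + 1) = 0 := by
      rcases Nat.even_or_odd' i with ⟨t, rfl | rfl⟩
      · exact Or.inr (pd_odd t)
      · exact Or.inl ⟨pd_odd t, pd_odd (t + 1)⟩
    simp only [List.cons.injEq, and_true]
    omega
  · rintro (rfl | rfl | rfl | rfl | rfl)
    · exact ⟨3, by omega, by simp [wordAt_three, pd_three, pd_four, pd_five]⟩
    · exact ⟨1, by omega, by simp [wordAt_three, pd_one, pd_two, pd_three]⟩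
    · exact ⟨2, by omega, by simp [wordAt_three, pd_two, pd_three, pd_four]⟩
    · exact ⟨4, by omega, by simp [wordAt_three, pd_four, pd_five, pd_six]⟩
    · exact ⟨6, by omega, by simp [wordAt_three, pd_six, pd_seven, pd_eight]⟩

lemma complexity_two : pdComplexity 2 = 3 := by
  unfold pdComplexity
  simp_rw [allowed_two_iff, Finset.setOfPred_mem, Set.ncard_coe_finset]
  decide

lemma complexity_three : pdComplexity 3 = 5 := by
  unfold pdComplexity
  simp_rw [allowed_three_iff, Finset.setOfPred_mem, Set.ncard_coe_finset]
  decide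

/-- The bounds with denominators cleared. -/
lemma complexity_nat_bounds (m : ℕ) (hm : 2 ≤ m) :
    3 * m ≤ 2 * pdComplexity m ∧ 3 * pdComplexity m ≤ 5 * m := by
  induction m using Nat.strong_induction_on with
  | _ m ih =>
    by_cases h4 : 4 ≤ m
    · have h1 := ih (m / 2) (by omega) (by omega)
      have h2 := ih ((m + 1) / 2) (by omega) (by omega)
      have h3 : m / 2 + (m + 1) / 2 = m := by omega
      rw [complexity_rec m h4]
      omega
    · obtain rfl | rfl : m = 2 ∨ m = 3 := by omega
      · rw [complexity_two]
        omega
      · rw [complexity_three]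
        omega

theorem pd_complexity_bounds (m : ℕ) (hm : 2 ≤ m) :
    (3 / 2 : ℝ) * m ≤ (pdComplexity m : ℝ) ∧ (pdComplexity m : ℝ) ≤ (5 / 3 : ℝ) * m := by
  obtain ⟨h1, h2⟩ := complexity_nat_bounds m hm
  have h1' : (3 : ℝ) * m ≤ 2 * pdComplexity m := by exact_mod_cast h1
  have h2' : (3 : ℝ) * pdComplexity m ≤ 5 * m := by exact_mod_cast h2
  constructor <;> linarith
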